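/- Let S and S' be two seed trees of the same size k ≥ 3, let τ be a finite tree and σ ⊆ τ a nonempty subtree of τ such that σ is (S,S')-blind. Then for every decoration d: V_τ → ℕ_{>0} and every n ≥ k: E[D_{σ,τ,d}(T_n^S)] = E[D_{σ,τ,d}(T_n^{S'})], where D_{σ,τ,d}(T_n^S) is the number of perfect embeddings Φ of (τ,d) in T_n^S satisfying Φ(τ) ∩ S = Φ(σ). -/

import Mathlib

/-!
The perfect embeddings counted by `perfCountSeed` are the total maps among the *placements*:
partial embeddings `Φ` of `τ` into the tree for which `A` is exactly the set of vertices sent into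
the seed. The proof works with all sums `∑_Φ g (profile of Φ)`, where the profile records the
domain of `Φ` and the degrees of the images, and `g` is an arbitrary function of it
(`placementSum`).

These sums are closed under the dynamics. A placement in the enlarged tree is an old placement
together with the choice of at most one vertex `c` of `τ` sent to the new vertex
(`placementSum_extendTree`). Whether the extension is again a placement, and what its profile is,
depends only on the old profile, on `c`, and on which vertex of `τ` (if any) sits at the attachment
point. The conditional law of the latter depends only on the old profile, because attachment
probabilities are functions of the degree and sum to one (`sum_attachProb_hitBy`). Hence one step
of the chain turns `g` into `stepOp g`, an operator that does not involve the seed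
(`integral_placementSum_succ`).

Iterating reduces the claim to the ungrown seeds, where the placements are exactly the embeddings of
`τ.induce A`, with their degrees in the seed (`placementSum_zero`). Blindness provides a
degree-preserving bijection between these embeddings for the two seeds (`IsBlind.exists_equiv`);
decorations with a zero are harmless since the seeds have no isolated vertex.
-/

open MeasureTheory Filter Asymptotics

noncomputable section

namespace AffinePA

instance (V : Type*) : MeasurableSpace (SimpleGraph V) := ⊤

/-- The degree of a vertex. -/
def degR {V : Type*} (G : SimpleGraph V) (v : V) : ℕ := Nat.card {w // G.Adj v w}

/-- The tree on `n+1` vertices obtained from `G` by attaching the new vertex to `u`. -/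
def extendTree {n : ℕ} (G : SimpleGraph (Fin n)) (u : Fin n) : SimpleGraph (Fin (n + 1)) :=
  SimpleGraph.fromRel fun a b =>
    (∃ a' b' : Fin n, a = Fin.castSucc a' ∧ b = Fin.castSucc b' ∧ G.Adj a' b') ∨
      (a = Fin.castSucc u ∧ b = Fin.last n)

/-- One step of the affine preferential attachment dynamics. -/
def stepMeasure (α : ℝ) {n : ℕ} (G : SimpleGraph (Fin n)) :
    Measure (SimpleGraph (Fin (n + 1))) :=
  ∑ u : Fin n,
    ENNReal.ofReal (((degR G u : ℝ) - 1 + α) / ((1 + α) * (n : ℝ) - 2)) •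
      Measure.dirac (extendTree G u)

/-- The law of the α-PA tree with `m` added vertices, started from the seed `S`. -/
def paLaw (α : ℝ) {k : ℕ} (S : SimpleGraph (Fin k)) :
    (m : ℕ) → Measure (SimpleGraph (Fin (k + m)))
  | 0 => Measure.dirac S
  | m + 1 => (paLaw α S m).bind (stepMeasure α)

/-- The weight `∏_u [deg_T(f u) - 1]_{ℓ u}` of a map `f`. -/
def embWeight {V W : Type*} [Fintype V] (T : SimpleGraph W) (ℓ : V → ℕ) (f : V → W) : ℝ :=
  ∏ u : V, ((degR T (f u) - 1).descFactorial (ℓ u) : ℝ)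

/-- The observable `F_{(τ,ℓ)}(T)`. -/
def obsG {V W : Type*} [Fintype V] (τ : SimpleGraph V) (ℓ : V → ℕ) (T : SimpleGraph W) : ℝ :=
  ∑ᶠ φ : τ ↪g T, embWeight T ℓ ⇑φ

/-- The weight `w(τ,ℓ)` of a decorated tree. -/
def weightG {V : Type*} [Fintype V] (τ : SimpleGraph V) (ℓ : V → ℕ) : ℕ :=
  if Fintype.card V ≤ 2 ∧ ∀ v, ℓ v = 0 then 1
  else (∑ v, ℓ v) + Nat.card {v // degR τ v = 1 ∧ ℓ v = 0}

/-- A decorated tree: a finite graph on `Fin n` with nonnegative integer decorations. -/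
structure DecTree where
  n : ℕ
  tree : SimpleGraph (Fin n)
  dec : Fin n → ℕ

def DecTree.wt (τ : DecTree) : ℕ := weightG τ.tree τ.dec

def DecTree.decSum (τ : DecTree) : ℕ := ∑ v, τ.dec v

def DecTree.obs (τ : DecTree) {W : Type*} (T : SimpleGraph W) : ℝ := obsG τ.tree τ.dec T

/-- The strict partial order `≺` on decorated trees. -/
def DecLt (σ τ : DecTree) : Prop :=
  (σ.wt < τ.wt ∧ σ.n ≤ τ.n) ∨ (σ.wt = τ.wt ∧ σ.n < τ.n) ∨
    (σ.wt = τ.wt ∧ σ.n = τ.n ∧ σ.decSum < τ.decSum)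

open Classical in
/-- `F_{τ+τ}(T)`: sum over pairs of embeddings with overlapping images. -/
def obsOverlapG {V W : Type*} [Fintype V] (τ : SimpleGraph V) (ℓ : V → ℕ)
    (T : SimpleGraph W) : ℝ :=
  ∑ᶠ (φ₁ : τ ↪g T) (φ₂ : τ ↪g T),
    if (Set.range ⇑φ₁ ∩ Set.range ⇑φ₂).Nonempty then
      embWeight T ℓ ⇑φ₁ * embWeight T ℓ ⇑φ₂
    else 0

open Classical in
/-- `F_{τ,σ}(T)`: sum over pairs of embeddings with disjoint images. -/
def obsDisjG {V₁ V₂ W : Type*} [Fintype V₁] [Fintype V₂] (τ : SimpleGraph V₁) (ℓτ : V₁ → ℕ)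
    (σ : SimpleGraph V₂) (ℓσ : V₂ → ℕ) (T : SimpleGraph W) : ℝ :=
  ∑ᶠ (φ₁ : τ ↪g T) (φ₂ : σ ↪g T),
    if Disjoint (Set.range ⇑φ₁) (Set.range ⇑φ₂) then
      embWeight T ℓτ ⇑φ₁ * embWeight T ℓσ ⇑φ₂
    else 0

/-- `f ≈ g` : same order of magnitude, eventually. -/
def asympEquiv (f g : ℕ → ℝ) : Prop :=
  ∃ C : ℝ, 0 < C ∧ ∀ᶠ n in atTop, f n ≤ C * g n ∧ g n ≤ C * f n

/-- Descending factorial `[x]_l` of a real number. -/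
def descPoch (x : ℝ) (l : ℕ) : ℝ := ∏ i ∈ Finset.range l, (x - (i : ℝ))

/-- Total variation distance between two measures. -/
def tvDist {X : Type*} [MeasurableSpace X] (μ ν : Measure X) : ℝ :=
  ⨆ s : {s : Set X // MeasurableSet s}, |(μ ↑s).toReal - (ν ↑s).toReal|

open Classical in
/-- The contribution to `F_τ` of embeddings whose image meets the seed. -/
def obsMeetSeed (k m : ℕ) {r : ℕ} (τ : SimpleGraph (Fin r)) (ℓ : Fin r → ℕ)
    (T : SimpleGraph (Fin (k + m))) : ℝ :=
  ∑ᶠ φ : τ ↪g T,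
    if ∃ (x : Fin r) (y : Fin k), φ x = Fin.castAdd m y then embWeight T ℓ ⇑φ else 0

/-- The contribution to `F_τ` of embeddings contained in the seed. -/
def obsInSeed (k m : ℕ) {r : ℕ} (τ : SimpleGraph (Fin r)) (ℓ : Fin r → ℕ)
    (S : SimpleGraph (Fin k)) (T : SimpleGraph (Fin (k + m))) : ℝ :=
  ∑ᶠ φ : τ ↪g S, embWeight T ℓ fun u => Fin.castAdd m (φ u)

/-- `D_{τ,d}(T)`: the number of perfect embeddings of `(τ,d)` in `T`. -/
def perfCount {V W : Type*} (τ : SimpleGraph V) (d : V → ℕ) (T : SimpleGraph W) : ℕ :=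
  Nat.card {φ : τ ↪g T // ∀ u, degR T (φ u) = d u}

/-- `τ` is `(T₁,T₂)`-blind. -/
def IsBlind {V W₁ W₂ : Type*} (τ : SimpleGraph V) (T₁ : SimpleGraph W₁)
    (T₂ : SimpleGraph W₂) : Prop :=
  ∀ d : V → ℕ, (∀ u, 1 ≤ d u) → perfCount τ d T₁ = perfCount τ d T₂

/-- `D_{σ,τ,d}(T)`: perfect embeddings of `(τ,d)` meeting the seed exactly in `φ(A)`. -/
def perfCountSeed (k m : ℕ) {r : ℕ} (τ : SimpleGraph (Fin r)) (A : Finset (Fin r))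
    (d : Fin r → ℕ) (T : SimpleGraph (Fin (k + m))) : ℕ :=
  Nat.card {φ : τ ↪g T //
    (∀ u, degR T (φ u) = d u) ∧ ∀ u : Fin r, (∃ y : Fin k, φ u = Fin.castAdd m y) ↔ u ∈ A}

/-- The σ-algebra generated by `T_0, …, T_m`. -/
def natFilt {Ω : Type*} [MeasurableSpace Ω] {k : ℕ}
    (T : (m : ℕ) → Ω → SimpleGraph (Fin (k + m))) (m : ℕ) : MeasurableSpace Ω :=
  ⨆ j ∈ Set.Iic m, MeasurableSpace.comap (T j) inferInstance

/-- `(T_m)` is an α-PA chain started from the seed `S`, on the probability space `(Ω,P)`. -/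
structure IsPAChain (α : ℝ) {k : ℕ} (S : SimpleGraph (Fin k)) {Ω : Type*} [MeasurableSpace Ω]
    (P : Measure Ω) (T : (m : ℕ) → Ω → SimpleGraph (Fin (k + m))) : Prop where
  isProb : IsProbabilityMeasure P
  meas : ∀ m, Measurable (T m)
  init : ∀ᵐ ω ∂P, T 0 ω = S
  step : ∀ (m : ℕ) (f : SimpleGraph (Fin (k + (m + 1))) → ℝ),
    P[(fun ω => f (T (m + 1) ω))|natFilt T m] =ᵐ[P]
      fun ω => ∫ G, f G ∂stepMeasure α (T m ω)

/-- The natural filtration of the chain. -/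
def natFiltration {Ω : Type*} [mΩ : MeasurableSpace Ω] {k : ℕ}
    (T : (m : ℕ) → Ω → SimpleGraph (Fin (k + m))) (hT : ∀ m, Measurable (T m)) :
    Filtration ℕ mΩ where
  seq := natFilt T
  mono' _ _ hij := biSup_mono fun _ hx => le_trans hx hij
  le' _ := iSup_le fun l => iSup_le fun _ => (hT l).comap_le

/-- Isomorphism of simple graphs as a setoid. -/
def isoSetoid (n : ℕ) : Setoid (SimpleGraph (Fin n)) where
  r G H := Nonempty (G ≃g H)
  iseqv := ⟨fun G => ⟨RelIso.refl G.Adj⟩, fun ⟨e⟩ => ⟨e.symm⟩, fun ⟨e⟩ ⟨f⟩ => ⟨e.trans f⟩⟩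

/-- Isomorphism classes of graphs on `n` vertices. -/
def IsoClass (n : ℕ) : Type := Quotient (isoSetoid n)

instance (n : ℕ) : MeasurableSpace (IsoClass n) := ⊤

/-- The law of the isomorphism class of the α-PA tree with `n` vertices grown from `S`. -/
def isoClassLaw (α : ℝ) {k : ℕ} (S : SimpleGraph (Fin k)) (n : ℕ) : Measure (IsoClass n) :=
  if h : k ≤ n then
    (paLaw α S (n - k)).map fun G =>
      Quotient.mk (isoSetoid n) (G.map (finCongr (Nat.add_sub_cancel' h)).toEmbedding)
  else 0


/-! ### Integration over graphs on a finite vertex set -/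

instance (V : Type*) : DiscreteMeasurableSpace (SimpleGraph V) := ⟨fun _ => trivial⟩

lemma integral_bind_of_finite {X Y : Type*} [Finite X] [Finite Y] [MeasurableSpace X]
    [MeasurableSpace Y] [DiscreteMeasurableSpace X] [DiscreteMeasurableSpace Y]
    (μ : Measure X) [IsFiniteMeasure μ] (κ : X → Measure Y) [∀ x, IsFiniteMeasure (κ x)]
    (f : Y → ℝ) : ∫ y, f y ∂(μ.bind κ) = ∫ x, (∫ y, f y ∂κ x) ∂μ := by
  have := Fintype.ofFinite X
  have := Fintype.ofFinite Y
  have hκ : Measurable κ := .of_discrete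
  have hb : ∀ s, (μ.bind κ) s = ∑ x, κ x s * μ {x} := fun s => by
    rw [Measure.bind_apply (MeasurableSet.of_discrete) hκ.aemeasurable, lintegral_fintype]
  have hfin : IsFiniteMeasure (μ.bind κ) := ⟨by
    rw [hb]
    exact ENNReal.sum_lt_top.2 fun x _ =>
      ENNReal.mul_lt_top (measure_lt_top _ _) (measure_lt_top _ _)⟩
  rw [integral_fintype .of_finite, integral_fintype .of_finite]
  have h1 : ∀ y, (μ.bind κ).real {y} = ∑ x, (κ x).real {y} * μ.real {x} := fun y => by
    rw [measureReal_def, hb, ENNReal.toReal_sum fun x _ =>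
      (ENNReal.mul_lt_top (measure_lt_top _ _) (measure_lt_top _ _)).ne]
    simp [measureReal_def]
  have h2 : ∀ x, ∫ y, f y ∂κ x = ∑ y, (κ x).real {y} * f y := fun x => by
    rw [integral_fintype .of_finite]; simp
  simp only [h1, h2, smul_eq_mul, Finset.sum_mul, Finset.mul_sum]
  rw [Finset.sum_comm]
  exact Finset.sum_congr rfl fun x _ => Finset.sum_congr rfl fun y _ => by ring

/-- The probability that the next vertex of an `n`-vertex tree is attached to a given vertex of
degree `e`. As in `stepMeasure`, a negative quotient (possible only for `e = 0`, or when the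
denominator is negative) is truncated to zero. -/
def attachProb (α : ℝ) (n e : ℕ) : ℝ :=
  (ENNReal.ofReal (((e : ℝ) - 1 + α) / ((1 + α) * (n : ℝ) - 2))).toReal

instance isFiniteMeasure_stepMeasure (α : ℝ) {n : ℕ} (G : SimpleGraph (Fin n)) :
    IsFiniteMeasure (stepMeasure α G) := by
  refine ⟨?_⟩
  rw [stepMeasure, Measure.finsetSum_apply]
  exact ENNReal.sum_lt_top.2 fun u _ => by simp

lemma integral_stepMeasure (α : ℝ) {n : ℕ} (G : SimpleGraph (Fin n))
    (f : SimpleGraph (Fin (n + 1)) → ℝ) :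
    ∫ G', f G' ∂stepMeasure α G =
      ∑ w, attachProb α n (degR G w) * f (extendTree G w) := by
  rw [stepMeasure, integral_finsetSum_measure]
  · refine Finset.sum_congr rfl fun u _ => ?_
    rw [integral_smul_measure, integral_dirac]
    rfl
  · intro u _
    exact (Integrable.of_finite (μ := Measure.dirac (extendTree G u))).smul_measure
      ENNReal.ofReal_ne_top

instance isFiniteMeasure_paLaw (α : ℝ) {k : ℕ} (S : SimpleGraph (Fin k)) :
    ∀ m, IsFiniteMeasure (paLaw α S m)
  | 0 => by rw [paLaw]; infer_instance
  | m + 1 => by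
    have := isFiniteMeasure_paLaw α S m
    refine ⟨?_⟩
    have hκ : Measurable (stepMeasure α (n := k + m)) := .of_discrete
    have := Fintype.ofFinite (SimpleGraph (Fin (k + m)))
    rw [paLaw]
    erw [Measure.bind_apply (MeasurableSet.of_discrete) hκ.aemeasurable]
    rw [lintegral_fintype]
    exact ENNReal.sum_lt_top.2 fun x _ =>
      ENNReal.mul_lt_top (measure_lt_top _ _) (measure_lt_top _ _)

lemma integral_paLaw_succ (α : ℝ) {k : ℕ} (S : SimpleGraph (Fin k)) (m : ℕ)
    (f : SimpleGraph (Fin (k + (m + 1))) → ℝ) :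
    ∫ G, f G ∂paLaw α S (m + 1) =
      ∫ G, (∑ w, attachProb α (k + m) (degR G w) * f (extendTree G w)) ∂paLaw α S m := by
  rw [paLaw]
  refine (integral_bind_of_finite (paLaw α S m) (stepMeasure α) f).trans ?_
  exact integral_congr_ae (.of_forall fun G => integral_stepMeasure α G f)

/-! ### Adjacency and degrees after one attachment -/

section Extend

variable {n : ℕ} (G : SimpleGraph (Fin n)) (w : Fin n)

lemma extendTree_adj_castSucc (a b : Fin n) :
    (extendTree G w).Adj a.castSucc b.castSucc ↔ G.Adj a b := by
  have hne : ∀ x : Fin n, x.castSucc ≠ Fin.last n := fun x => (Fin.castSucc_lt_last x).ne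
  simp only [extendTree, SimpleGraph.fromRel_adj, hne, and_false, or_false, ne_eq,
    Fin.castSucc_inj]
  constructor
  · rintro ⟨-, ⟨a', b', rfl, rfl, h⟩ | ⟨a', b', rfl, rfl, h⟩⟩
    exacts [h, h.symm]
  · exact fun h => ⟨h.ne, .inl ⟨a, b, rfl, rfl, h⟩⟩

lemma extendTree_adj_last (a : Fin n) :
    (extendTree G w).Adj a.castSucc (Fin.last n) ↔ a = w := by
  have hne : ∀ x : Fin n, x.castSucc ≠ Fin.last n := fun x => (Fin.castSucc_lt_last x).ne
  simp [extendTree, SimpleGraph.fromRel_adj, hne, (hne _).symm]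

open Classical in
lemma degR_eq_sum {V : Type*} [Fintype V] (G : SimpleGraph V) (v : V) :
    degR G v = ∑ x, if G.Adj v x then 1 else 0 := by
  rw [degR, Nat.card_eq_fintype_card, Fintype.card_subtype, Finset.card_filter]

lemma degR_extendTree_castSucc (a : Fin n) :
    degR (extendTree G w) a.castSucc = degR G a + if a = w then 1 else 0 := by
  classical
  rw [degR_eq_sum, degR_eq_sum, Fin.sum_univ_castSucc]
  congr 1
  · exact Finset.sum_congr rfl fun i _ => if_congr (extendTree_adj_castSucc G w a i) rfl rfl
  · exact if_congr (extendTree_adj_last G w a) rfl rfl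

lemma degR_extendTree_last : degR (extendTree G w) (Fin.last n) = 1 := by
  rw [degR_eq_sum, Fin.sum_univ_castSucc]
  simp [SimpleGraph.adj_comm _ (Fin.last n), extendTree_adj_last]

end Extend

/-! ### The attachment probabilities sum to one -/

/-- The only features of trees used by the dynamics: there are no isolated vertices, and the
degrees sum to `2 (n - 1)`. -/
def TreeDegrees {n : ℕ} (G : SimpleGraph (Fin n)) : Prop :=
  (∀ v, 1 ≤ degR G v) ∧ (∑ v, degR G v) + 2 = 2 * n

lemma TreeDegrees.of_isTree {n : ℕ} (hn : 2 ≤ n) {G : SimpleGraph (Fin n)} (hG : G.IsTree) :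
    TreeDegrees G := by
  classical
  have hdeg : ∀ v, degR G v = G.degree v := fun v => by
    rw [degR, Nat.card_eq_fintype_card, ← SimpleGraph.card_neighborSet_eq_degree]
    rfl
  have : Nontrivial (Fin n) := Fin.nontrivial_iff_two_le.2 hn
  refine ⟨fun v => ?_, ?_⟩
  · rw [hdeg]
    exact hG.1.preconnected.degree_pos_of_nontrivial v
  · have h1 := G.sum_degrees_eq_twice_card_edges
    have h2 := hG.card_edgeFinset
    simp only [hdeg, h1]
    simp only [Fintype.card_fin] at h2
    omega

lemma TreeDegrees.extendTree {n : ℕ} {G : SimpleGraph (Fin n)} (hG : TreeDegrees G) (w : Fin n) :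
    TreeDegrees (extendTree G w) := by
  refine ⟨fun v => ?_, ?_⟩
  · refine Fin.lastCases ?_ (fun a => ?_) v
    · rw [degR_extendTree_last]
    · rw [degR_extendTree_castSucc]
      exact le_add_right (hG.1 a)
  · rw [Fin.sum_univ_castSucc, degR_extendTree_last]
    simp only [degR_extendTree_castSucc, Finset.sum_add_distrib, Finset.sum_ite_eq',
      Finset.mem_univ, if_true]
    have := hG.2
    omega

lemma TreeDegrees.sum_attachProb {α : ℝ} (hα : 0 < α) {n : ℕ} (hn : 2 ≤ n)
    {G : SimpleGraph (Fin n)} (hG : TreeDegrees G) :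
    ∑ w, attachProb α n (degR G w) = 1 := by
  have hn' : (2 : ℝ) ≤ n := by exact_mod_cast hn
  have hZ : 0 < (1 + α) * (n : ℝ) - 2 := by nlinarith
  have h1 : ∀ w, attachProb α n (degR G w) =
      ((degR G w : ℝ) - 1 + α) / ((1 + α) * (n : ℝ) - 2) := fun w => by
    have : (1 : ℝ) ≤ degR G w := by exact_mod_cast hG.1 w
    exact ENNReal.toReal_ofReal (div_nonneg (by linarith) hZ.le)
  have h2 : (∑ w, (degR G w : ℝ)) + 2 = 2 * n := by exact_mod_cast hG.2
  simp only [h1, ← Finset.sum_div]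
  rw [div_eq_one_iff_eq hZ.ne']
  simp only [Finset.sum_add_distrib, Finset.sum_sub_distrib, Finset.sum_const, Finset.card_univ,
    Fintype.card_fin, nsmul_eq_mul]
  linarith

lemma ae_paLaw_treeDegrees (α : ℝ) {k : ℕ} {S : SimpleGraph (Fin k)} (hS : TreeDegrees S) :
    ∀ m, ∀ᵐ G ∂paLaw α S m, TreeDegrees G
  | 0 => by
    rw [paLaw]
    exact (ae_dirac_iff (MeasurableSet.of_discrete)).2 hS
  | m + 1 => by
    have ih := ae_paLaw_treeDegrees α hS m
    have hκ : Measurable (stepMeasure α (n := k + m)) := .of_discrete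
    rw [paLaw, ae_iff]
    erw [Measure.bind_apply (MeasurableSet.of_discrete) hκ.aemeasurable]
    rw [lintegral_eq_zero_iff .of_discrete]
    filter_upwards [ih] with G hG
    rw [stepMeasure, Measure.finsetSum_apply]
    refine Finset.sum_eq_zero fun u _ => ?_
    have : extendTree G u ∉ {a | ¬TreeDegrees a} := fun h => h (hG.extendTree u)
    rw [Measure.smul_apply, Measure.dirac_apply' _ MeasurableSet.of_discrete]
    erw [Set.indicator_of_notMem this]
    rw [smul_zero]

/-! ### Partial embeddings and their degree profiles -/

section Placement

variable {r : ℕ} (τ : SimpleGraph (Fin r)) (A : Finset (Fin r))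

/-- A partial map `Φ` from the vertices of `τ` to those of `G` (with `none` for the vertices where
`Φ` is undefined) is a placement if it embeds the subgraph of `τ` induced by its domain into `G`,
and if `A` is exactly the set of vertices sent into the seed. -/
def IsPlacement {k m : ℕ} (G : SimpleGraph (Fin (k + m)))
    (Φ : Fin r → Option (Fin (k + m))) : Prop :=
  (∀ x y a b, Φ x = some a → Φ y = some b → (a = b → x = y) ∧ (G.Adj a b ↔ τ.Adj x y)) ∧
    ∀ x, (∃ y : Fin k, Φ x = some (Fin.castAdd m y)) ↔ x ∈ A

/-- The profile of a partial map: its domain, and the degree in `G` of each image. -/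
def degProfile {n : ℕ} (G : SimpleGraph (Fin n)) (Φ : Fin r → Option (Fin n)) :
    Fin r → Option ℕ :=
  fun x => (Φ x).map (degR G)

open Classical in
/-- The sum of `g` over the profiles of all placements in `G`. -/
def placementSum {k m : ℕ} (g : (Fin r → Option ℕ) → ℝ) (G : SimpleGraph (Fin (k + m))) : ℝ :=
  ∑ Φ : Fin r → Option (Fin (k + m)), if IsPlacement τ A G Φ then g (degProfile G Φ) else 0

open Classical in
/-- The vertex of `τ` that `Φ` sends to `w`, if there is one. -/
def hitBy {n : ℕ} (Φ : Fin r → Option (Fin n)) (w : Fin n) : Option (Fin r) :=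
  if h : ∃ x, Φ x = some w then some h.choose else none

variable {τ A} in
lemma IsPlacement.hitBy_eq_some {k m : ℕ} {G : SimpleGraph (Fin (k + m))}
    {Φ : Fin r → Option (Fin (k + m))} (hΦ : IsPlacement τ A G Φ) (w : Fin (k + m)) (x : Fin r) :
    hitBy Φ w = some x ↔ Φ x = some w := by
  rw [hitBy]
  split_ifs with h
  · constructor
    · intro hx
      rw [← Option.some_inj.1 hx]
      exact h.choose_spec
    · intro hx
      rw [(hΦ.1 _ _ _ _ h.choose_spec hx).1 rfl]
  · simp only [false_iff]
    exact fun hx => h ⟨x, hx⟩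

/-- The partial map that sends the vertex `c` (if any) to the newest vertex, and agrees with `Φ`
elsewhere. -/
def extendMap {n : ℕ} (Φ : Fin r → Option (Fin n)) (c : Option (Fin r)) :
    Fin r → Option (Fin (n + 1)) :=
  fun x => if c = some x then some (Fin.last n) else (Φ x).map Fin.castSucc

/-- Whether a placement with profile `q` remains a placement once `c` is sent to the newest vertex,
when that vertex is attached to the image of `i` (outside the image of the placement if
`i = none`): `c` must be a vertex outside `A` not yet placed, and its neighbours among the placed
vertices must be exactly the one at the attachment point. -/
def CanExtend (q : Fin r → Option ℕ) (c i : Option (Fin r)) : Prop :=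
  ∀ u, c = some u → u ∉ A ∧ q u = none ∧ ∀ y, q y ≠ none → (τ.Adj u y ↔ i = some y)

/-- The profile of the extended placement: the newest vertex has degree one, and the degree at the
attachment point goes up by one. -/
def extendProfile (q : Fin r → Option ℕ) (c i : Option (Fin r)) : Fin r → Option ℕ :=
  fun x => if c = some x then some 1 else (q x).map fun e => e + if i = some x then 1 else 0

variable {τ A}

lemma degProfile_eq_none {n : ℕ} {G : SimpleGraph (Fin n)} {Φ : Fin r → Option (Fin n)}
    {x : Fin r} : degProfile G Φ x = none ↔ Φ x = none := by
  simp [degProfile]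

lemma degProfile_extendMap {k m : ℕ} {G : SimpleGraph (Fin (k + m))}
    {Φ : Fin r → Option (Fin (k + m))} (hΦ : IsPlacement τ A G Φ) (w : Fin (k + m))
    (c : Option (Fin r)) :
    degProfile (extendTree G w) (extendMap Φ c) =
      extendProfile (degProfile G Φ) c (hitBy Φ w) := by
  funext x
  simp only [degProfile, extendMap, extendProfile, hΦ.hitBy_eq_some]
  split_ifs with h h'
  · simp [degR_extendTree_last]
  · simp [h', degR_extendTree_castSucc]
  · rcases hx : Φ x with _ | a
    · rfl
    · have : a ≠ w := by rintro rfl; exact h' hx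
      simp [degR_extendTree_castSucc, this]

lemma isPlacement_extendMap {k m : ℕ} {G : SimpleGraph (Fin (k + m))}
    {Φ : Fin r → Option (Fin (k + m))} (hΦ : IsPlacement τ A G Φ) {w : Fin (k + m)}
    {c : Option (Fin r)} (hc : CanExtend τ A (degProfile G Φ) c (hitBy Φ w)) :
    IsPlacement (m := m + 1) τ A (extendTree G w) (extendMap Φ c) := by
  have hne : ∀ a : Fin (k + m), a.castSucc ≠ Fin.last (k + m) :=
    fun a => (Fin.castSucc_lt_last a).ne
  have key : ∀ u y a, c = some u → Φ y = some a → (a = w ↔ τ.Adj u y) := fun u y a hu hy => by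
    rw [(hc u hu).2.2 y (by rw [Ne, degProfile_eq_none, hy]; simp), hΦ.hitBy_eq_some, hy,
      Option.some_inj]
  refine ⟨fun x y a b hx hy => ?_, fun x => ?_⟩
  · simp only [extendMap] at hx hy
    split_ifs at hx hy with h1 h2 h2
    · obtain rfl : x = y := Option.some_inj.1 (h1.symm.trans h2)
      obtain rfl := Option.some_inj.1 hx
      obtain rfl := Option.some_inj.1 hy
      simp
    · obtain ⟨b', hb', rfl⟩ := Option.map_eq_some_iff.1 hy
      obtain rfl := Option.some_inj.1 hx
      refine ⟨fun h => (hne _ h.symm).elim, ?_⟩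
      exact (SimpleGraph.adj_comm _ _ _).trans
        ((extendTree_adj_last G w b').trans (key x y b' h1 hb'))
    · obtain ⟨a', ha', rfl⟩ := Option.map_eq_some_iff.1 hx
      obtain rfl := Option.some_inj.1 hy
      refine ⟨fun h => (hne _ h).elim, ?_⟩
      exact (extendTree_adj_last G w a').trans
        ((key y x a' h2 ha').trans (SimpleGraph.adj_comm _ _ _))
    · obtain ⟨a', ha', rfl⟩ := Option.map_eq_some_iff.1 hx
      obtain ⟨b', hb', rfl⟩ := Option.map_eq_some_iff.1 hy
      refine ⟨fun h => (hΦ.1 x y a' b' ha' hb').1 (Fin.castSucc_injective _ h), ?_⟩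
      exact (extendTree_adj_castSucc G w a' b').trans (hΦ.1 x y a' b' ha' hb').2
  · rw [← hΦ.2 x]
    by_cases h : c = some x
    · have h1 := (hc x h).2.1
      rw [degProfile_eq_none] at h1
      simp only [extendMap, h, if_true, h1, reduceCtorEq, exists_false, iff_false, not_exists,
        Option.some_inj]
      exact fun y hy => hne (Fin.castAdd m y) hy.symm
    · simp only [extendMap, h, if_false, Option.map_eq_some_iff]
      refine exists_congr fun y => ⟨?_, fun hy => ⟨_, hy, rfl⟩⟩
      rintro ⟨a, ha, hay⟩
      rw [ha]
      exact congrArg some (Fin.castSucc_injective _ hay)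

lemma extendMap_injective {n : ℕ} {Φ Φ' : Fin r → Option (Fin n)} {c c' : Option (Fin r)}
    (hc : ∀ u, c = some u → Φ u = none) (hc' : ∀ u, c' = some u → Φ' u = none)
    (h : extendMap Φ c = extendMap Φ' c') : Φ = Φ' ∧ c = c' := by
  have hlast : ∀ (Ψ : Fin r → Option (Fin n)) (b : Option (Fin r)) x,
      extendMap Ψ b x = some (Fin.last n) ↔ b = some x := fun Ψ b x => by
    simp only [extendMap]
    split_ifs with hb
    · simp [hb]
    · simp only [hb, iff_false, Option.map_eq_some_iff, not_exists, not_and]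
      exact fun a _ ha => (Fin.castSucc_lt_last a).ne ha
  have hcc : c = c' := Option.ext fun x => by
    rw [← hlast Φ c x, ← hlast Φ' c' x, h]
  subst hcc
  refine ⟨funext fun x => ?_, rfl⟩
  by_cases hx : c = some x
  · rw [hc x hx, hc' x hx]
  · have := congrFun h x
    simp only [extendMap, hx, if_false] at this
    exact Option.map_injective (Fin.castSucc_injective n) this

/-- Every placement in the enlarged graph is obtained from an old one: forget the vertex sent to the
newest vertex. -/
lemma exists_eq_extendMap {k m : ℕ} {G : SimpleGraph (Fin (k + m))} {w : Fin (k + m)}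
    {Ψ : Fin r → Option (Fin (k + (m + 1)))}
    (hΨ : IsPlacement τ A (m := m + 1) (extendTree G w) Ψ) :
    ∃ Φ c, IsPlacement τ A G Φ ∧ CanExtend τ A (degProfile G Φ) c (hitBy Φ w) ∧
      extendMap Φ c = Ψ := by
  have hne : ∀ a : Fin (k + m), a.castSucc ≠ Fin.last (k + m) :=
    fun a => (Fin.castSucc_lt_last a).ne
  have hc := fun x => hΨ.hitBy_eq_some (Fin.last (k + m)) x
  set c := hitBy Ψ (Fin.last (k + m)) with hcdef
  have hex : ∀ x, ∃ o : Option (Fin (k + m)), ∀ a, o = some a ↔ Ψ x = some a.castSucc := by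
    intro x
    rcases hx : Ψ x with _ | b
    · exact ⟨none, by simp⟩
    · refine Fin.lastCases (n := k + m) ?_ (fun b => ?_) b
      · exact ⟨none, fun a => by
          simp only [reduceCtorEq, Option.some_inj, false_iff]; exact (hne a).symm⟩
      · exact ⟨some b, fun a => by
          simp only [Option.some_inj]; exact (Fin.castSucc_inj).symm⟩
  choose Φ hΦ using hex
  have hpl : IsPlacement τ A G Φ := by
    refine ⟨fun x y a b hx hy => ?_, fun x => ?_⟩
    · have := hΨ.1 x y _ _ ((hΦ x a).1 hx) ((hΦ y b).1 hy)
      exact ⟨fun h => this.1 (by rw [h]), (extendTree_adj_castSucc G w a b).symm.trans this.2⟩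
    · rw [← hΨ.2 x]
      exact exists_congr fun y => hΦ x _
  refine ⟨Φ, c, hpl, fun u hu => ⟨fun huA => ?_, ?_, fun y hy => ?_⟩, funext fun x => ?_⟩
  · obtain ⟨y, hy⟩ := (hΨ.2 u).2 huA
    rw [(hc u).1 hu] at hy
    exact hne (Fin.castAdd m y) (Option.some_inj.1 hy).symm
  · rw [degProfile_eq_none, Option.eq_none_iff_forall_ne_some]
    intro a ha
    have := (hΦ u a).1 ha
    rw [(hc u).1 hu] at this
    exact hne a (Option.some_inj.1 this).symm
  · rw [Ne, degProfile_eq_none] at hy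
    obtain ⟨a, ha⟩ := Option.ne_none_iff_exists'.1 hy
    rw [hpl.hitBy_eq_some, ha, Option.some_inj, ← extendTree_adj_last G w a,
      SimpleGraph.adj_comm (extendTree G w)]
    exact (hΨ.1 u y _ _ ((hc u).1 hu) ((hΦ y a).1 ha)).2.symm
  · simp only [extendMap]
    split_ifs with hx
    · exact ((hc x).1 hx).symm
    · rcases hx' : Ψ x with _ | b
      · rcases hx2 : Φ x with _ | a
        · rfl
        · rw [(hΦ x a).1 hx2] at hx'
          exact absurd hx' (by simp)
      · revert hx'
        refine Fin.lastCases (n := k + m) (fun hx' => ?_) (fun b hx' => ?_) b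
        · exact (hx ((hc x).2 hx')).elim
        · rw [(hΦ x b).2 hx']
          rfl

open Classical in
/-- The placements in the enlarged graph are the extensions of the placements in the old one, and
their profiles depend only on the old profile, on the vertex sent to the newest vertex, and on
the vertex sent to the attachment point. -/
lemma placementSum_extendTree {k m : ℕ} (g : (Fin r → Option ℕ) → ℝ)
    (G : SimpleGraph (Fin (k + m))) (w : Fin (k + m)) :
    placementSum (m := m + 1) τ A g (extendTree G w) =
      ∑ Φ : Fin r → Option (Fin (k + m)), if IsPlacement τ A G Φ then
        ∑ c, (if CanExtend τ A (degProfile G Φ) c (hitBy Φ w) then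
          g (extendProfile (degProfile G Φ) c (hitBy Φ w)) else 0) else 0 := by
  have hR : ∀ Φ : Fin r → Option (Fin (k + m)), (if IsPlacement τ A G Φ then
        ∑ c, (if CanExtend τ A (degProfile G Φ) c (hitBy Φ w) then
          g (extendProfile (degProfile G Φ) c (hitBy Φ w)) else 0) else 0) =
      ∑ c, if IsPlacement τ A G Φ ∧ CanExtend τ A (degProfile G Φ) c (hitBy Φ w) then
          g (extendProfile (degProfile G Φ) c (hitBy Φ w)) else 0 := fun Φ => by
    by_cases h : IsPlacement τ A G Φ <;> simp [h]
  simp only [hR]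
  rw [← Fintype.sum_prod_type', placementSum, ← Finset.sum_filter, ← Finset.sum_filter]
  symm
  refine Finset.sum_bij (fun p _ => extendMap p.1 p.2) ?_ ?_ ?_ ?_
  · intro p hp
    rw [Finset.mem_filter] at hp ⊢
    exact ⟨Finset.mem_univ _, isPlacement_extendMap hp.2.1 hp.2.2⟩
  · intro p hp p' hp' h
    rw [Finset.mem_filter] at hp hp'
    have := extendMap_injective (fun u hu => degProfile_eq_none.1 (hp.2.2 u hu).2.1)
      (fun u hu => degProfile_eq_none.1 (hp'.2.2 u hu).2.1) h
    exact Prod.ext this.1 this.2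
  · intro Ψ hΨ
    rw [Finset.mem_filter] at hΨ
    obtain ⟨Φ, c, h1, h2, h3⟩ := exists_eq_extendMap hΨ.2
    exact ⟨(Φ, c), Finset.mem_filter.2 ⟨Finset.mem_univ _, h1, h2⟩, h3⟩
  · intro p hp
    rw [Finset.mem_filter] at hp
    exact congrArg g (degProfile_extendMap hp.2.1 w p.2).symm

/-- The probability that the attachment point is the image of `i` under a placement with
profile `q`, or lies outside its image if `i = none`. -/
def hitProb (α : ℝ) (n : ℕ) (q : Fin r → Option ℕ) : Option (Fin r) → ℝ
  | some x => (q x).elim 0 (attachProb α n)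
  | none => 1 - ∑ x, (q x).elim 0 (attachProb α n)

open Classical in
/-- Averages over the attachment point of a function of the vertex of `τ` that it hits depend on the
placement through its profile only. -/
lemma sum_attachProb_hitBy {α : ℝ} (hα : 0 < α) {k m : ℕ} (hk : 2 ≤ k)
    {G : SimpleGraph (Fin (k + m))} (hG : TreeDegrees G) {Φ : Fin r → Option (Fin (k + m))}
    (hΦ : IsPlacement τ A G Φ) (K : Option (Fin r) → ℝ) :
    ∑ w, attachProb α (k + m) (degR G w) * K (hitBy Φ w) =
      ∑ i, hitProb α (k + m) (degProfile G Φ) i * K i := by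
  have hsome : ∀ x, ∑ w, (if hitBy Φ w = some x then attachProb α (k + m) (degR G w) else 0) =
      (degProfile G Φ x).elim 0 (attachProb α (k + m)) := fun x => by
    simp only [hΦ.hitBy_eq_some, degProfile]
    rcases Φ x with _ | a <;> simp
  have hall : ∑ i, ∑ w, (if hitBy Φ w = i then attachProb α (k + m) (degR G w) else 0) = 1 := by
    rw [Finset.sum_comm]
    simpa using hG.sum_attachProb hα (by omega)
  have hmass : ∀ i, ∑ w, (if hitBy Φ w = i then attachProb α (k + m) (degR G w) else 0) =
      hitProb α (k + m) (degProfile G Φ) i := fun i => by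
    rcases i with _ | x
    · rw [Fintype.sum_option] at hall
      simp only [hsome] at hall
      rw [hitProb]
      linarith
    · exact hsome x
  simp only [← hmass, Finset.sum_mul]
  rw [Finset.sum_comm]
  exact Finset.sum_congr rfl fun w _ => by simp [ite_mul]

open Classical in
variable (τ A) in
/-- The one-step transition operator on functions of the profile. -/
def stepOp (α : ℝ) (n : ℕ) (g : (Fin r → Option ℕ) → ℝ) (q : Fin r → Option ℕ) : ℝ :=
  ∑ i, hitProb α n q i *
    ∑ c, if CanExtend τ A q c i then g (extendProfile q c i) else 0

lemma sum_attachProb_placementSum {α : ℝ} (hα : 0 < α) {k m : ℕ} (hk : 2 ≤ k)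
    {G : SimpleGraph (Fin (k + m))} (hG : TreeDegrees G) (g : (Fin r → Option ℕ) → ℝ) :
    ∑ w, attachProb α (k + m) (degR G w) *
        placementSum (m := m + 1) τ A g (extendTree G w) =
      placementSum τ A (stepOp τ A α (k + m) g) G := by
  classical
  simp only [placementSum_extendTree, Finset.mul_sum]
  rw [Finset.sum_comm, placementSum]
  refine Finset.sum_congr rfl fun Φ _ => ?_
  split_ifs with hΦ
  · exact sum_attachProb_hitBy hα hk hG hΦ fun i =>
      ∑ c, if CanExtend τ A (degProfile G Φ) c i then
        g (extendProfile (degProfile G Φ) c i) else 0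
  · simp

/-- Conditioning on the last step, the expectation is governed by a recursion that does not
involve the seed. -/
lemma integral_placementSum_succ {α : ℝ} (hα : 0 < α) {k : ℕ} (hk : 2 ≤ k)
    {S : SimpleGraph (Fin k)} (hS : TreeDegrees S) (m : ℕ) (g : (Fin r → Option ℕ) → ℝ) :
    ∫ G, placementSum τ A g G ∂paLaw α S (m + 1) =
      ∫ G, placementSum τ A (stepOp τ A α (k + m) g) G ∂paLaw α S m := by
  rw [integral_paLaw_succ]
  refine integral_congr_ae ?_
  filter_upwards [ae_paLaw_treeDegrees α hS m] with G hG
  exact sum_attachProb_placementSum hα hk hG g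

/-! ### Placements in the seed -/

/-- The profile with domain `A` and degrees `e`. -/
def profileOf (e : (↑A : Set (Fin r)) → ℕ) : Fin r → Option ℕ :=
  open Classical in fun x => if h : x ∈ A then some (e ⟨x, h⟩) else none

/-- Before any growth, the domain of a placement is exactly `A`. -/
lemma placementSum_zero {k : ℕ} (S : SimpleGraph (Fin k)) (g : (Fin r → Option ℕ) → ℝ) :
    placementSum (m := 0) τ A g S =
      ∑ᶠ ψ : τ.induce (↑A : Set (Fin r)) ↪g S, g (profileOf fun u => degR S (ψ u)) := by
  classical
  have := Fintype.ofFinite (τ.induce (↑A : Set (Fin r)) ↪g S)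
  rw [finsum_eq_sum_of_fintype, placementSum, ← Finset.sum_filter]
  symm
  refine Finset.sum_bij (fun ψ _ x => if h : x ∈ A then some (ψ ⟨x, h⟩) else none) ?_ ?_ ?_ ?_
  · intro ψ _
    rw [Finset.mem_filter]
    refine ⟨Finset.mem_univ _, fun x y a b hx hy => ?_, fun x => ?_⟩
    · dsimp only at hx hy
      split_ifs at hx hy with h1 h2
      obtain rfl := Option.some_inj.1 hx
      obtain rfl := Option.some_inj.1 hy
      exact ⟨fun h => congrArg Subtype.val (ψ.injective h), ψ.map_adj_iff⟩
    · by_cases h : x ∈ A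
      · simp only [h, dif_pos, iff_true]
        exact ⟨_, rfl⟩
      · simp [h]
  · intro ψ _ ψ' _ h
    refine RelEmbedding.ext fun u => ?_
    have hu := congrFun h u.1
    have hu' : u.1 ∈ A := u.2
    simp only [hu', dif_pos] at hu
    exact Option.some_inj.1 hu
  · intro Φ hΦ
    rw [Finset.mem_filter] at hΦ
    obtain ⟨-, h1, h2⟩ := hΦ
    have hA : ∀ u : (↑A : Set (Fin r)), ∃ y : Fin k, Φ u = some y := fun u => (h2 u).2 u.2
    choose f hf using hA
    refine ⟨⟨⟨f, fun u v h => Subtype.ext ((h1 u v _ _ (hf u) (hf v)).1 h)⟩, ?_⟩,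
      Finset.mem_univ _, funext fun x => ?_⟩
    · intro u v
      exact (h1 u v _ _ (hf u) (hf v)).2
    · by_cases h : x ∈ A
      · simp only [h, dif_pos]
        exact (hf ⟨x, h⟩).symm
      · simp only [h, dif_neg, not_false_iff]
        symm
        rw [Option.eq_none_iff_forall_ne_some]
        exact fun a ha => h ((h2 x).1 ⟨a, ha⟩)
  · intro ψ _
    refine congrArg g (funext fun x => ?_)
    by_cases h : x ∈ A <;> simp [profileOf, degProfile, h]

end Placement

/-- Blindness says that the embeddings into the two seeds can be matched so that the degrees of
the images agree. -/
lemma IsBlind.exists_equiv {V W₁ W₂ : Type*} [Finite V] [Finite W₁] [Finite W₂]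
    {σ : SimpleGraph V} {T₁ : SimpleGraph W₁} {T₂ : SimpleGraph W₂} (h : IsBlind σ T₁ T₂)
    (h₁ : ∀ v, 1 ≤ degR T₁ v) (h₂ : ∀ v, 1 ≤ degR T₂ v) :
    ∃ E : (σ ↪g T₁) ≃ (σ ↪g T₂), ∀ ψ u, degR T₂ (E ψ u) = degR T₁ (ψ u) := by
  have : Finite (σ ↪g T₁) := DFunLike.finite _
  have : Finite (σ ↪g T₂) := DFunLike.finite _
  have hfib : ∀ d : V → ℕ, Nonempty ({ψ : σ ↪g T₁ // (fun u => degR T₁ (ψ u)) = d} ≃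
      {ψ : σ ↪g T₂ // (fun u => degR T₂ (ψ u)) = d}) := fun d => by
    by_cases hd : ∀ u, 1 ≤ d u
    · have := h d hd
      simp only [perfCount] at this
      simp only [funext_iff]
      exact Finite.card_eq.1 this
    · have e1 : IsEmpty {ψ : σ ↪g T₁ // (fun u => degR T₁ (ψ u)) = d} :=
        ⟨fun ψ => hd fun u => by rw [← ψ.2]; exact h₁ _⟩
      have e2 : IsEmpty {ψ : σ ↪g T₂ // (fun u => degR T₂ (ψ u)) = d} :=
        ⟨fun ψ => hd fun u => by rw [← ψ.2]; exact h₂ _⟩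
      exact ⟨Equiv.equivOfIsEmpty _ _⟩
  let F := fun d => (hfib d).some
  refine ⟨(Equiv.sigmaFiberEquiv _).symm.trans
    ((Equiv.sigmaCongrRight F).trans (Equiv.sigmaFiberEquiv _)), fun ψ u => ?_⟩
  exact congrFun (F _ ⟨ψ, rfl⟩).2 u

/-! ### The counting observable as a sum over placements -/

open Classical in
lemma perfCountSeed_eq_placementSum {k m r : ℕ} (τ : SimpleGraph (Fin r)) (A : Finset (Fin r))
    (d : Fin r → ℕ) (G : SimpleGraph (Fin (k + m))) :
    (perfCountSeed k m τ A d G : ℝ) =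
      placementSum τ A (fun q => if q = fun x => some (d x) then 1 else 0) G := by
  rw [perfCountSeed, placementSum, ← Finset.sum_filter, Finset.sum_boole, Finset.filter_filter,
    ← Fintype.card_subtype, ← Nat.card_eq_fintype_card]
  norm_cast
  refine Nat.card_congr (Equiv.ofBijective
    (fun φ => ⟨fun x => some (φ.1 x), ⟨fun x y a b hx hy => ?_, fun x => ?_⟩,
      funext fun x => ?_⟩) ⟨?_, ?_⟩)
  · obtain rfl := Option.some_inj.1 hx
    obtain rfl := Option.some_inj.1 hy
    exact ⟨fun h => φ.1.injective h, φ.1.map_adj_iff⟩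
  · simpa using φ.2.2 x
  · exact congrArg some (φ.2.1 x)
  · intro φ φ' h
    refine Subtype.ext (RelEmbedding.ext fun x => ?_)
    exact Option.some_inj.1 (congrFun (congrArg Subtype.val h) x)
  · rintro ⟨Φ, ⟨h1, h2⟩, h3⟩
    have hΦ : ∀ x, ∃ a, Φ x = some a := fun x => by
      have := congrFun h3 x
      obtain ⟨a, ha, -⟩ := Option.map_eq_some_iff.1 this
      exact ⟨a, ha⟩
    choose f hf using hΦ
    refine ⟨⟨⟨⟨f, fun x y h => (h1 x y _ _ (hf x) (hf y)).1 h⟩, ?_⟩, fun x => ?_, fun x => ?_⟩, ?_⟩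
    · intro x y
      exact (h1 x y _ _ (hf x) (hf y)).2
    · have := congrFun h3 x
      simp only [degProfile, hf] at this
      exact Option.some_inj.1 this
    · rw [← h2 x, hf]
      exact exists_congr fun y => Option.some_inj.symm
    · exact Subtype.ext (funext fun x => (hf x).symm)

/-- The profile statistics of placements have the same expectation for both seeds. -/
lemma integral_placementSum_eq {α : ℝ} (hα : 0 < α) {k : ℕ} (hk : 2 ≤ k)
    {S S' : SimpleGraph (Fin k)} (hS : TreeDegrees S) (hS' : TreeDegrees S') {r : ℕ}
    {τ : SimpleGraph (Fin r)} {A : Finset (Fin r)}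
    (hblind : IsBlind (τ.induce (↑A : Set (Fin r))) S S') (m : ℕ)
    (g : (Fin r → Option ℕ) → ℝ) :
    ∫ G, placementSum τ A g G ∂paLaw α S m = ∫ G, placementSum τ A g G ∂paLaw α S' m := by
  induction m generalizing g with
  | zero =>
    rw [paLaw, paLaw]
    refine (integral_dirac _ _).trans (Eq.trans ?_ (integral_dirac _ _).symm)
    obtain ⟨E, hE⟩ := hblind.exists_equiv hS.1 hS'.1
    rw [placementSum_zero, placementSum_zero]
    refine finsum_eq_of_bijective E E.bijective fun ψ => ?_
    simp only [hE]
  | succ m ih =>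
    rw [integral_placementSum_succ hα hk hS, integral_placementSum_succ hα hk hS', ih]

/-- **Proposition 4.4.** Let `S, S'` be two seeds of the same size `k ≥ 3`,
`τ` a finite tree and `σ = τ.induce A ⊆ τ` a nonempty subtree which is `(S,S')`-blind. Then
for every decoration `d : V_τ → ℕ_{>0}` and every `n = k + m ≥ k`,
`E[D_{σ,τ,d}(T_n^S)] = E[D_{σ,τ,d}(T_n^{S'})]`. -/
theorem blind_subtree_expectation (α : ℝ) (hα : 0 < α) (k : ℕ) (hk : 3 ≤ k)
    (S S' : SimpleGraph (Fin k)) (hS : S.IsTree) (hS' : S'.IsTree)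
    (r : ℕ) (τ : SimpleGraph (Fin r)) (hτ : τ.IsTree)
    (A : Finset (Fin r)) (hA : A.Nonempty)
    (hsub : (τ.induce (↑A : Set (Fin r))).IsTree)
    (hblind : IsBlind (τ.induce (↑A : Set (Fin r))) S S')
    (d : Fin r → ℕ) (hd : ∀ u, 1 ≤ d u) (m : ℕ) :
    (∫ G, (perfCountSeed k m τ A d G : ℝ) ∂paLaw α S m) =
      ∫ G, (perfCountSeed k m τ A d G : ℝ) ∂paLaw α S' m := by
  simp only [perfCountSeed_eq_placementSum]
  exact integral_placementSum_eq hα (by omega) (.of_isTree (by omega) hS)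
    (.of_isTree (by omega) hS') hblind m _

end AffinePA
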